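/- Let ℓ ≥ 2 be an integer and S a (2^ℓ − 1)-periodic binary sequence whose linear complexity is at most ℓ (as is the case for m-sequences). Then there exists an integer k with 1 < k ≤ 3 such that S has a full peak in the periodic correlation measure of order k, i.e. θ_k(S) = 2^ℓ − 1. -/

import Mathlib

open Finset

/-- The first `N` terms of the binary sequence `s` satisfy a linear recurrence of order `L`
over `F₂`: `s (i+L) = c_{L-1} s (i+L-1) + … + c_0 s i` for `0 ≤ i < N - L`. -/
def IsLinRecOn (s : ℕ → ZMod 2) (N L : ℕ) : Prop :=
  ∃ c : Fin L → ZMod 2, ∀ i, i + L < N → s (i + L) = ∑ j : Fin L, c j * s (i + j)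

/-- The `N`th linear complexity of a binary sequence `s`: the smallest positive `L` such that
the first `N` terms satisfy a linear recurrence of order `L`, with the convention that it is `0`
when the first `N` terms all vanish. -/
noncomputable def linComplexity (s : ℕ → ZMod 2) (N : ℕ) : ℕ :=
  if ∀ i < N, s i = 0 then 0 else sInf {L | 0 < L ∧ IsLinRecOn s N L}

/-- The `N`th (aperiodic) correlation measure of order `k` of a binary sequence `s`:
`max_{U,D} |∑_{n=0}^{U-1} (-1)^{s_{n+d₁}+…+s_{n+d_k}}|` over `U ≤ N - k + 1` and
`0 ≤ d₁ < … < d_k ≤ N - U`. -/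
noncomputable def corr (s : ℕ → ZMod 2) (N k : ℕ) : ℕ :=
  sSup {m : ℕ | ∃ (U : ℕ) (d : Fin k → ℕ), U + k ≤ N + 1 ∧ StrictMono d ∧
    (∀ j, d j + U ≤ N) ∧
    m = (∑ n ∈ range U, (-1 : ℤ) ^ (∑ j : Fin k, (s (n + d j)).val)).natAbs}

/-- The periodic correlation measure of order `k` of a `T`-periodic binary sequence `s`:
`max_D |∑_{n=0}^{T-1} (-1)^{s_{n+d₁}+…+s_{n+d_k}}|` over `0 ≤ d₁ < … < d_k < T`. -/
noncomputable def pcorr (s : ℕ → ZMod 2) (T k : ℕ) : ℕ :=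
  sSup {m : ℕ | ∃ d : Fin k → ℕ, StrictMono d ∧ (∀ j, d j < T) ∧
    m = (∑ n ∈ range T, (-1 : ℤ) ^ (∑ j : Fin k, (s (n + d j)).val)).natAbs}

/-- The first `N` terms of `s` are generated by a (not necessarily linear) recurrence of
order `M`. -/
def IsMaxRecOn (s : ℕ → ZMod 2) (N M : ℕ) : Prop :=
  ∃ f : (Fin M → ZMod 2) → ZMod 2, ∀ i, i + M < N → s (i + M) = f (fun j => s (i + j))

/-- The `N`th maximum-order complexity of a binary sequence `s`. -/
noncomputable def maxOrderComplexity (s : ℕ → ZMod 2) (N : ℕ) : ℕ :=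
  sInf {M | 0 < M ∧ IsMaxRecOn s N M}

theorem pcorr_full (s : ℕ → ZMod 2) (T k : ℕ) (d : Fin k → ℕ) (hd : StrictMono d)
    (hdT : ∀ j, d j < T) (h : ∀ n, ∑ j : Fin k, s (n + d j) = 0) : pcorr s T k = T := by
  unfold pcorr
  apply IsGreatest.csSup_eq
  constructor
  · refine ⟨d, hd, hdT, ?_⟩
    have h1 : ∀ n ∈ range T, (-1 : ℤ) ^ (∑ j : Fin k, (s (n + d j)).val) = 1 := by
      intro n _
      apply Even.neg_one_pow
      rw [← ZMod.natCast_eq_zero_iff_even]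
      push_cast
      simpa using h n
    rw [Finset.sum_congr rfl h1]
    simp
  · rintro m ⟨e, _, _, rfl⟩
    refine (Int.natAbs_sum_le _ _).trans ?_

    simp [Int.natAbs_pow]

theorem rec_zero (L ℓ : ℕ) (hLl : L ≤ ℓ) (c : Fin L → ZMod 2) (t : ℕ → ZMod 2)
    (hrec : ∀ i, t (i + L) = ∑ j : Fin L, c j * t (i + j))
    (h0 : ∀ i < ℓ, t i = 0) : ∀ i, t i = 0 := by
  intro i
  induction i using Nat.strong_induction_on with
  | _ i ih =>
    by_cases hi : i < ℓ
    · exact h0 i hi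
    · obtain ⟨m, rfl⟩ : ∃ m, i = m + L := ⟨i - L, by omega⟩
      rw [hrec]
      apply Finset.sum_eq_zero
      intro j _
      rw [ih (m + j) (by omega), mul_zero]

theorem exists_rec (T ℓ : ℕ) (hT : 0 < T) (hl : 0 < ℓ) (hlT : ℓ ≤ T) (s : ℕ → ZMod 2)
    (hper : ∀ i, s (i + T) = s i) (hL : linComplexity s (2 * T) ≤ ℓ) :
    ∃ L, L ≤ ℓ ∧ ∃ c : Fin L → ZMod 2, ∀ i, s (i + L) = ∑ j : Fin L, c j * s (i + j) := by
  have hP : Function.Periodic s T := hper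
  have key : ∃ L, L ≤ ℓ ∧ IsLinRecOn s (2 * T) L := by
    unfold linComplexity at hL
    split_ifs at hL with h
    · exact ⟨1, hl, 0, fun i hi => by simpa using h _ hi⟩
    · have hne : {L | 0 < L ∧ IsLinRecOn s (2 * T) L}.Nonempty :=
        ⟨2 * T, by omega, 0, fun i hi => by omega⟩
      exact ⟨_, hL, (Nat.sInf_mem hne).2⟩
  obtain ⟨L, h1, c, hc⟩ := key
  refine ⟨L, h1, c, fun i => ?_⟩
  have hmod : ∀ a, s (i + a) = s (i % T + a) := by
    intro a
    rw [← hP.map_mod_nat (i + a), ← hP.map_mod_nat (i % T + a), Nat.mod_add_mod]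
  rw [hmod L, hc (i % T) (by have := Nat.mod_lt i hT; omega)]
  exact Finset.sum_congr rfl fun j _ => by rw [hmod j]

/-- **m-sequences.** A `(2^ℓ - 1)`-periodic binary sequence with linear complexity at most `ℓ`
has a full peak in the periodic correlation measure of some order `k` with `1 < k ≤ 3`. -/
theorem m_sequence_peak (ℓ : ℕ) (hℓ : 2 ≤ ℓ) (s : ℕ → ZMod 2)
    (hper : ∀ i, s (i + (2 ^ ℓ - 1)) = s i)
    (hL : linComplexity s (2 * (2 ^ ℓ - 1)) ≤ ℓ) :
    ∃ k, 1 < k ∧ k ≤ 3 ∧ pcorr s (2 ^ ℓ - 1) k = 2 ^ ℓ - 1 := by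
  have hlT : ℓ ≤ 2 ^ ℓ - 1 := by have := Nat.lt_two_pow_self (n := ℓ); omega
  have hT3 : 3 ≤ 2 ^ ℓ - 1 := by
    have : 2 ^ 2 ≤ 2 ^ ℓ := Nat.pow_le_pow_right (by norm_num) hℓ
    omega
  obtain ⟨L, hLl, c, hrec⟩ := exists_rec (2 ^ ℓ - 1) ℓ (by omega) (by omega) hlT s hper hL
  have hcard : Fintype.card (Fin ℓ → ZMod 2) = 2 ^ ℓ := by simp [ZMod.card]
  generalize hT : 2 ^ ℓ - 1 = T at *
  have hP : Function.Periodic s T := hper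
  have h2 : ∀ x : ZMod 2, x + x = 0 := by decide
  -- a linear combination of shifts vanishing on a window vanishes identically
  have comb : ∀ k (d : Fin k → ℕ), (∀ i < ℓ, ∑ j, s (i + d j) = 0) →
      ∀ i, ∑ j, s (i + d j) = 0 := by
    intro k d
    apply rec_zero L ℓ hLl c (fun i => ∑ j, s (i + d j))
    intro i
    simp only [Finset.mul_sum]
    rw [Finset.sum_comm]
    refine Finset.sum_congr rfl fun j _ => ?_
    rw [show i + L + d j = i + d j + L by ring, hrec]
    exact Finset.sum_congr rfl fun m _ => by rw [show i + d j + m = i + m + d j by ring]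
  let v : Fin T → Fin ℓ → ZMod 2 := fun n j => s (j + n)
  have two : ∀ a b : Fin T, a < b → v a = v b → pcorr s T 2 = T := by
    intro a b hab h
    refine pcorr_full s T 2 ![a, b] ?_ ?_ (comb _ _ ?_)
    · intro x y hxy
      fin_cases x <;> fin_cases y <;> simp_all
    · intro j
      fin_cases j <;> simp
    · intro i hi
      have := congrFun h ⟨i, hi⟩
      simp only [v] at this
      simp [Fin.sum_univ_two, this, h2]
  by_cases hinj : Function.Injective v
  · have hne : ∀ a, v a ≠ 0 := by
      intro a ha
      have hz : ∀ i, s (i + a) = 0 := by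
        have := comb 1 (fun _ => a) (fun i hi => by
          simpa [v] using congrFun ha ⟨i, hi⟩)
        simpa using this
      have hz' : ∀ m, s m = 0 := by
        intro m
        rw [← hP m, show m + T = (m + T - a) + a by omega]
        exact hz _
      have : (⟨0, by omega⟩ : Fin T) = ⟨1, by omega⟩ := hinj (by
        funext j; simp [v, hz'])
      simp at this
    have himg : Finset.univ.image v = Finset.univ.erase 0 := by
      apply Finset.eq_of_subset_of_card_le
      · intro x hx
        obtain ⟨a, _, rfl⟩ := Finset.mem_image.1 hx
        simp [hne a]
      · rw [Finset.card_image_of_injective _ hinj, Finset.card_erase_of_mem (Finset.mem_univ _),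
          Finset.card_univ, hcard, hT]
        simp
    let z : Fin T := ⟨0, by omega⟩
    let o : Fin T := ⟨1, by omega⟩
    have hzo : z ≠ o := by simp [z, o]
    have hself : ∀ x : Fin ℓ → ZMod 2, x + x = 0 := fun x => funext fun j => h2 _
    have hmem : v z + v o ∈ Finset.univ.image v := by
      rw [himg]
      simp only [Finset.mem_erase, Finset.mem_univ, and_true]
      intro h
      exact hzo (hinj (add_right_cancel (h.trans (hself (v o)).symm)))
    obtain ⟨b, _, hb⟩ := Finset.mem_image.1 hmem
    have hb0 : b ≠ z := by
      rintro rfl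
      exact hne o (left_eq_add.1 hb)
    have hb1 : b ≠ o := by
      rintro rfl
      exact hne z (right_eq_add.1 hb)
    have hb2 : 1 < (b : ℕ) := by
      have e0 : (b : ℕ) ≠ 0 := fun h => hb0 (Fin.ext h)
      have e1 : (b : ℕ) ≠ 1 := fun h => hb1 (Fin.ext h)
      omega
    refine ⟨3, by norm_num, le_rfl, pcorr_full s T 3 ![0, 1, b] ?_ ?_ (comb _ _ ?_)⟩
    · intro x y hxy
      fin_cases x <;> fin_cases y <;> simp_all <;> omega
    · intro j
      fin_cases j <;> simp <;> omega
    · intro i hi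
      have := congrFun hb ⟨i, hi⟩
      simp only [v, z, o, Pi.add_apply] at this
      simp only [Fin.sum_univ_three, Matrix.cons_val]
      rw [this]
      exact h2 _
  · simp only [Function.Injective, not_forall] at hinj
    obtain ⟨a, b, hab, hne⟩ := hinj
    refine ⟨2, by norm_num, by norm_num, ?_⟩
    rcases lt_or_gt_of_ne hne with h | h
    · exact two a b h hab
    · exact two b a h hab.symm
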